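/- Let X be a compact Hausdorff space and C a C(X)-category. Then there exists a family { x_* : C → C_x }_{x∈X} of C*-functors (the fiber functors, where C_x has arrows the quotients (ρ,σ)_x := (ρ,σ) ⊗_{(ρ,ρ)} (ρ,ρ)_x and (ρ,ρ)_x := (ρ,ρ)/((ρ,ρ)·C_x(X))) such that for every arrow t ∈ (ρ,σ), writing t_x := x_*(t): the norm function x ↦ ‖t_x‖ is upper semicontinuous on X, and ‖t‖ = sup_{x∈X} ‖t_x‖. -/

import Mathlib

/-!
STATEMENT 9: Let `X` be a compact Hausdorff space and `C` a `C(X)`-category. Then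
there exists a family `{ x_* : C → C_x }_{x∈X}` of C*-functors (the fiber functors,
where `C_x` has arrows the fibers `(ρ,σ)_x := (ρ,σ) ⊗_{(ρ,ρ)} (ρ,ρ)_x`, with
`(ρ,ρ)_x := (ρ,ρ)/((ρ,ρ)·C_x(X))`) such that for every arrow `t ∈ (ρ,σ)`, writing
`t_x := x_*(t)`: the norm function `x ↦ ‖t_x‖` is upper semicontinuous on `X`, and
`‖t‖ = sup_{x∈X} ‖t_x‖`.

The fiber `(ρ,σ)_x` is realized as the quotient of `(ρ,σ)` by the closed subspace
generated by `C_x(X)·(ρ,σ)` (which is canonically isomorphic to the tensor product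
fiber), `x_*` as the quotient map, and `‖t_x‖` as the corresponding quotient
seminorm; that the `x_*` are C*-functors into C*-categories is expressed by the
compatibility of the quotient seminorms with the operations of `C`.
-/

universe u v w u' v'

/-- A C*-category structure on a family of Banach spaces `Hom ρ σ` indexed by objects:
bilinear norm-decreasing composition, identities, and an isometric involutive
contravariant `*` satisfying the C*-identity. -/
structure CStarCategoryStruct {Obj : Type u} (Hom : Obj → Obj → Type v)
    [∀ ρ σ, NormedAddCommGroup (Hom ρ σ)] [∀ ρ σ, NormedSpace ℂ (Hom ρ σ)] :
    Type max u v where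
  comp : ∀ {ρ σ τ : Obj}, Hom σ τ → Hom ρ σ → Hom ρ τ
  id : ∀ ρ : Obj, Hom ρ ρ
  star : ∀ {ρ σ : Obj}, Hom ρ σ → Hom σ ρ
  comp_assoc : ∀ {ρ σ τ υ : Obj} (t : Hom τ υ) (u : Hom σ τ) (v : Hom ρ σ),
    comp (comp t u) v = comp t (comp u v)
  id_comp : ∀ {ρ σ : Obj} (t : Hom ρ σ), comp (id σ) t = t
  comp_id : ∀ {ρ σ : Obj} (t : Hom ρ σ), comp t (id ρ) = t
  add_comp : ∀ {ρ σ τ : Obj} (t t' : Hom σ τ) (u : Hom ρ σ),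
    comp (t + t') u = comp t u + comp t' u
  comp_add : ∀ {ρ σ τ : Obj} (t : Hom σ τ) (u u' : Hom ρ σ),
    comp t (u + u') = comp t u + comp t u'
  smul_comp : ∀ {ρ σ τ : Obj} (c : ℂ) (t : Hom σ τ) (u : Hom ρ σ),
    comp (c • t) u = c • comp t u
  comp_smul : ∀ {ρ σ τ : Obj} (c : ℂ) (t : Hom σ τ) (u : Hom ρ σ),
    comp t (c • u) = c • comp t u
  norm_comp_le : ∀ {ρ σ τ : Obj} (t : Hom σ τ) (u : Hom ρ σ), ‖comp t u‖ ≤ ‖t‖ * ‖u‖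
  star_star : ∀ {ρ σ : Obj} (t : Hom ρ σ), star (star t) = t
  star_add : ∀ {ρ σ : Obj} (t t' : Hom ρ σ), star (t + t') = star t + star t'
  star_smul : ∀ {ρ σ : Obj} (c : ℂ) (t : Hom ρ σ),
    star (c • t) = (starRingEnd ℂ) c • star t
  star_comp : ∀ {ρ σ τ : Obj} (t : Hom σ τ) (u : Hom ρ σ),
    star (comp t u) = comp (star u) (star t)
  star_id : ∀ ρ : Obj, star (id ρ) = id ρ
  norm_star : ∀ {ρ σ : Obj} (t : Hom ρ σ), ‖star t‖ = ‖t‖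
  cstar_identity : ∀ {ρ σ : Obj} (t : Hom ρ σ), ‖comp (star t) t‖ = ‖t‖ ^ 2


variable {Obj : Type u} {Hom : Obj → Obj → Type v}
  [∀ ρ σ, NormedAddCommGroup (Hom ρ σ)] [∀ ρ σ, NormedSpace ℂ (Hom ρ σ)]

/-- A `C(X)`-category: a C*-category `C` equipped with a unital *-homomorphism of
`C(X)` into `Z(C)` (i.e., a central action of `C(X)` on the arrow spaces, acting
identically on the left and on the right). -/
structure CXAction (X : Type w) [TopologicalSpace X] [CompactSpace X] [T2Space X]
    (C : CStarCategoryStruct Hom) : Type _ where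
  act : C(X, ℂ) → ∀ ρ σ : Obj, Hom ρ σ → Hom ρ σ
  act_add : ∀ f (ρ σ : Obj) (t t' : Hom ρ σ), act f ρ σ (t + t') = act f ρ σ t + act f ρ σ t'
  act_smul : ∀ f (ρ σ : Obj) (c : ℂ) (t : Hom ρ σ), act f ρ σ (c • t) = c • act f ρ σ t
  add_act : ∀ f g (ρ σ : Obj) (t : Hom ρ σ), act (f + g) ρ σ t = act f ρ σ t + act g ρ σ t
  smul_act : ∀ (c : ℂ) f (ρ σ : Obj) (t : Hom ρ σ), act (c • f) ρ σ t = c • act f ρ σ t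
  mul_act : ∀ f g (ρ σ : Obj) (t : Hom ρ σ), act (f * g) ρ σ t = act f ρ σ (act g ρ σ t)
  one_act : ∀ (ρ σ : Obj) (t : Hom ρ σ), act 1 ρ σ t = t
  left_mult : ∀ f {ρ σ τ : Obj} (t : Hom σ τ) (u : Hom ρ σ),
    act f ρ τ (C.comp t u) = C.comp (act f σ τ t) u
  right_mult : ∀ f {ρ σ τ : Obj} (t : Hom σ τ) (u : Hom ρ σ),
    act f ρ τ (C.comp t u) = C.comp t (act f ρ σ u)
  star_act : ∀ f (ρ σ : Obj) (t : Hom ρ σ),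
    C.star (act f ρ σ t) = act (star f) σ ρ (C.star t)
  norm_act_le : ∀ f (ρ σ : Obj) (t : Hom ρ σ), ‖act f ρ σ t‖ ≤ ‖f‖ * ‖t‖

variable {X : Type w} [TopologicalSpace X] [CompactSpace X] [T2Space X]

/-- The kernel of the fiber functor `x_*` on `(ρ,σ)`: the closed subspace generated
by `C_x(X)·(ρ,σ)`, where `C_x(X)` is the ideal of functions vanishing at `x`. -/
def fiberNull {C : CStarCategoryStruct Hom} (A : CXAction X C) (x : X) (ρ σ : Obj) :
    Submodule ℂ (Hom ρ σ) :=
  (Submodule.span ℂ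
    {s : Hom ρ σ | ∃ f : C(X, ℂ), ∃ t : Hom ρ σ, f x = 0 ∧ s = A.act f ρ σ t}).topologicalClosure

/-- The fiber seminorm `‖t_x‖`: the quotient seminorm of `(ρ,σ)_x = (ρ,σ)/fiberNull`. -/
noncomputable def fiberSeminorm {C : CStarCategoryStruct Hom} (A : CXAction X C)
    (x : X) {ρ σ : Obj} (t : Hom ρ σ) : ℝ :=
  sInf {r : ℝ | ∃ s ∈ fiberNull A x ρ σ, r = ‖t - s‖}

/-!
The proof localizes arrows by cutoffs. A cutoff `f` at `x` is a real function bounded by `1` which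
equals `1` near `x`; as its support shrinks to `x`, `f` kills `C_x(X)·(ρ,σ)` in norm, so that
`‖f t‖` tends to `‖t_x‖`. Since `C(X)` is central, `‖f² (u ∘ v)‖ ≤ ‖f u‖ ‖f v‖` and
`‖f² (t* ∘ t)‖ = ‖f t‖²`, and the C*-identities of the fibers follow in the limit.

If `‖t_x‖ < c` for every `x`, then by compactness `t = ∑ pᵢ fᵢ t` for a finite partition of unity
`pᵢ` and cutoffs `fᵢ`, equal to `1` on the support of `pᵢ`, with `‖fᵢ t‖ < c`, whence `‖t‖ ≤ N c`
for the number `N` of summands. Replacing `(t, fᵢ, c)` by `(t* ∘ t, fᵢ², c²)` preserves these data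
and squares `‖t‖`, so iterating removes the constant `N`.
-/

open Filter Topology

theorem le_of_frequently_pow_le {K : Type*} [Field K] [LinearOrder K] [IsStrictOrderedRing K]
    [Archimedean K] {a c N : K} (hc : 0 < c) (h : ∃ᶠ n : ℕ in atTop, a ^ n ≤ N * c ^ n) :
    a ≤ c := by
  by_contra! hca
  have hgrowth : ∀ᶠ n : ℕ in atTop, N < (a / c) ^ n :=
    (tendsto_pow_atTop_atTop_of_one_lt ((one_lt_div hc).2 hca)).eventually_gt_atTop N
  obtain ⟨n, hle, hlt⟩ := (h.and_eventually hgrowth).exists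
  rw [div_pow, lt_div_iff₀ (pow_pos hc n)] at hlt
  exact hlt.not_ge hle

section Cutoffs

variable {Y : Type*} [TopologicalSpace Y] {x : Y}

theorem exists_finset_partitionOfUnity [CompactSpace Y] [T2Space Y] {U : Y → Set Y}
    (hU : ∀ x, U x ∈ 𝓝 x) :
    ∃ (s : Finset Y) (p : s → C(Y, ℝ)),
      ∑ i, p i = 1 ∧ ∀ i, ‖p i‖ ≤ 1 ∧ Function.support (p i) ⊆ U i := by
  obtain ⟨s, hs⟩ := CompactSpace.elim_nhds_subcover (fun x => interior (U x))
    fun x => interior_mem_nhds.2 (hU x)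
  obtain ⟨p, hp⟩ := PartitionOfUnity.exists_isSubordinate isClosed_univ
    (fun i : s => interior (U i)) (fun _ => isOpen_interior)
    (by simp [Set.iUnion_subtype, hs])
  refine ⟨s, p, ?_, fun i => ⟨?_, ?_⟩⟩
  · ext y
    simpa [finsum_eq_sum_of_fintype] using p.sum_eq_one (Set.mem_univ y)
  · refine (ContinuousMap.norm_le _ zero_le_one).2 fun y => ?_
    simpa [abs_of_nonneg (p.nonneg i y)] using p.le_one i y
  · exact (subset_tsupport _).trans ((hp i).trans interior_subset)

/-- The cutoffs at `x` with support in `U`. They equal `1` near `x`, not only at `x`, so that a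
single cutoff at `x` controls the fibers over a whole neighborhood of `x`. -/
def cutoffSet (x : Y) (U : Set Y) : Set C(Y, ℝ) :=
  {f | f =ᶠ[𝓝 x] 1 ∧ (∀ y, |f y| ≤ 1) ∧ Function.support f ⊆ U}

/-- The filter of cutoffs at `x` whose support shrinks to `x`: the germ of an arrow at `x` is
studied by letting a cutoff tend to this filter. -/
def cutoffs (x : Y) : Filter C(Y, ℝ) := (𝓝 x).lift' (cutoffSet x)

theorem hasBasis_cutoffs (x : Y) : (cutoffs x).HasBasis (· ∈ 𝓝 x) (cutoffSet x) :=
  (𝓝 x).basis_sets.lift' fun _ _ hUV _ hf => ⟨hf.1, hf.2.1, hf.2.2.trans hUV⟩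

theorem eventually_cutoffs_mem {U : Set Y} (hU : U ∈ 𝓝 x) : ∀ᶠ f in cutoffs x, f ∈ cutoffSet x U :=
  (hasBasis_cutoffs x).mem_of_mem hU

theorem eventually_cutoffs_eq_one : ∀ᶠ f : C(Y, ℝ) in cutoffs x, f =ᶠ[𝓝 x] 1 :=
  (eventually_cutoffs_mem univ_mem).mono fun _ hf => hf.1

theorem eventually_cutoffs_norm_le_one [CompactSpace Y] : ∀ᶠ f in cutoffs x, ‖f‖ ≤ 1 :=
  (eventually_cutoffs_mem univ_mem).mono fun _ hf =>
    (ContinuousMap.norm_le _ zero_le_one).2 hf.2.1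

instance neBot_cutoffs [T4Space Y] : (cutoffs x).NeBot := by
  refine (hasBasis_cutoffs x).neBot_iff.2 fun {U} hU => ?_
  obtain ⟨K, hKx, hK, hKU⟩ := exists_mem_nhds_isClosed_subset (interior_mem_nhds.2 hU)
  obtain ⟨f, hf0, hf1, hf⟩ := exists_continuous_zero_one_of_isClosed
    isOpen_interior.isClosed_compl hK (Set.disjoint_compl_left_iff_subset.2 hKU)
  refine ⟨f, mem_of_superset hKx hf1, fun y => abs_le.2 ⟨by linarith [(hf y).1], (hf y).2⟩, ?_⟩
  exact fun y hy => interior_subset (by_contra fun hyU => hy (hf0 hyU))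

theorem tendsto_cutoffs_mul_self : Tendsto (fun f => f * f) (cutoffs x) (cutoffs x) := by
  refine (hasBasis_cutoffs x).tendsto_iff (hasBasis_cutoffs x) |>.2 fun U hU => ⟨U, hU, ?_⟩
  rintro f ⟨hf1, hf, hfU⟩
  refine ⟨by filter_upwards [hf1] with y hy using by simp [hy], fun y => ?_, ?_⟩
  · simpa [abs_mul] using mul_le_one₀ (hf y) (abs_nonneg _) (hf y)
  · exact fun y hy => hfU (left_ne_zero_of_mul hy)

theorem tendsto_cutoffs_realToRCLike_mul {𝕜 : Type*} [RCLike 𝕜] [CompactSpace Y] {g : C(Y, 𝕜)}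
    (hg : g x = 0) : Tendsto (fun f => f.realToRCLike 𝕜 * g) (cutoffs x) (𝓝 0) := by
  refine Metric.nhds_basis_closedBall.tendsto_right_iff.2 fun ε hε => ?_
  have hsmall : ∀ᶠ y in 𝓝 x, ‖g y‖ < ε :=
    g.continuous.norm.continuousAt.eventually_lt_const (by simpa [hg] using hε)
  filter_upwards [eventually_cutoffs_mem hsmall] with f ⟨_, hf, hfsupp⟩
  refine mem_closedBall_zero_iff.2 ((ContinuousMap.norm_le _ hε.le).2 fun y => ?_)
  by_cases hy : f y = 0
  · simpa [hy] using hε.le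
  · calc ‖(f.realToRCLike 𝕜 * g) y‖ = |f y| * ‖g y‖ := by simp
      _ ≤ 1 * ε := mul_le_mul (hf y) (hfsupp hy).le (norm_nonneg _) zero_le_one
      _ = ε := one_mul ε

end Cutoffs

namespace CXAction

variable {C : CStarCategoryStruct Hom} (A : CXAction X C) {ρ σ τ : Obj}

/-- The homomorphism from `C(X)` to the multipliers, restricted to the arrow space `(ρ,σ)` and
bundled as an algebra homomorphism into its linear endomorphisms. -/
noncomputable def toEnd (ρ σ : Obj) : C(X, ℂ) →ₐ[ℂ] Module.End ℂ (Hom ρ σ) :=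
  AlgHom.ofLinearMap
    { toFun := fun f =>
        { toFun := A.act f ρ σ
          map_add' := A.act_add f ρ σ
          map_smul' := A.act_smul f ρ σ }
      map_add' := fun f g => LinearMap.ext (A.add_act f g ρ σ)
      map_smul' := fun c f => LinearMap.ext (A.smul_act c f ρ σ) }
    (LinearMap.ext (A.one_act ρ σ))
    (fun f g => LinearMap.ext (A.mul_act f g ρ σ))

/-- The restriction of `CXAction.toEnd` to real-valued functions, through which cutoffs and
partitions of unity act on arrows. -/
noncomputable def realAct (ρ σ : Obj) : C(X, ℝ) →+* Module.End ℂ (Hom ρ σ) :=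
  (A.toEnd ρ σ : C(X, ℂ) →+* Module.End ℂ (Hom ρ σ)).comp
    (ContinuousMap.realToRCLikeStarAlgHom X ℂ : C(X, ℝ) →+* C(X, ℂ))

theorem realAct_apply (f : C(X, ℝ)) (t : Hom ρ σ) :
    A.realAct ρ σ f t = A.act (f.realToRCLike ℂ) ρ σ t := rfl

theorem norm_realAct_le (f : C(X, ℝ)) (t : Hom ρ σ) : ‖A.realAct ρ σ f t‖ ≤ ‖f‖ * ‖t‖ := by
  have hnorm : ‖f.realToRCLike ℂ‖ = ‖f‖ :=
    (ContinuousMap.isometry_realToRCLike X ℂ).norm_map_of_map_zero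
      (map_zero (ContinuousMap.realToRCLikeStarAlgHom X ℂ)) f
  exact hnorm ▸ A.norm_act_le (f.realToRCLike ℂ) ρ σ t

theorem realAct_star (f : C(X, ℝ)) (t : Hom ρ σ) :
    A.realAct σ ρ f (C.star t) = C.star (A.realAct ρ σ f t) := by
  rw [realAct_apply, realAct_apply, A.star_act,
    (ContinuousMap.isSelfAdjoint_realToRCLike ℂ).star_eq]

theorem realAct_mul_comp (f g : C(X, ℝ)) (t : Hom σ τ) (u : Hom ρ σ) :
    A.realAct ρ τ (f * g) (C.comp t u) = C.comp (A.realAct σ τ f t) (A.realAct ρ σ g u) := by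
  simp only [realAct_apply, ContinuousMap.realToRCLike_mul]
  rw [A.mul_act, A.right_mult, A.left_mult]

theorem norm_realAct_star_comp_self (f : C(X, ℝ)) (t : Hom ρ σ) :
    ‖A.realAct ρ ρ (f * f) (C.comp (C.star t) t)‖ = ‖A.realAct ρ σ f t‖ ^ 2 := by
  rw [realAct_mul_comp, realAct_star, C.cstar_identity]

theorem norm_pow_two_pow_le {ι : Type*} [Fintype ι] {p : ι → C(X, ℝ)} (hp : ∑ i, p i = 1)
    (hp_norm : ∀ i, ‖p i‖ ≤ 1) (k : ℕ) {f : ι → C(X, ℝ)} (hpf : ∀ i, p i * f i = p i)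
    {t : Hom ρ σ} {c : ℝ} (hf : ∀ i, ‖A.realAct ρ σ (f i) t‖ ≤ c) :
    ‖t‖ ^ 2 ^ k ≤ Fintype.card ι * c ^ 2 ^ k := by
  induction k generalizing σ f c with
  | zero =>
    have hsum : t = ∑ i, A.realAct ρ σ (p i) (A.realAct ρ σ (f i) t) := by
      simp only [← Module.End.mul_apply, ← map_mul, hpf, ← LinearMap.sum_apply, ← map_sum, hp,
        map_one, Module.End.one_apply]
    have hterm (i : ι) : ‖A.realAct ρ σ (p i) (A.realAct ρ σ (f i) t)‖ ≤ c :=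
      (A.norm_realAct_le _ _).trans <|
        (mul_le_of_le_one_left (norm_nonneg _) (hp_norm i)).trans (hf i)
    simpa [← hsum] using norm_sum_le_of_le Finset.univ fun i _ => hterm i
  | succ k ih =>
    have hsq := ih (σ := ρ) (f := fun i => f i * f i) (t := C.comp (C.star t) t) (c := c ^ 2)
      (fun i => by rw [← mul_assoc, hpf, hpf])
      (fun i => by
        rw [norm_realAct_star_comp_self]
        exact pow_le_pow_left₀ (norm_nonneg _) (hf i) 2)
    rwa [C.cstar_identity, ← pow_mul, ← pow_mul, ← pow_succ'] at hsq

/-- The linear span of `C_x(X)·(ρ,σ)`, whose closure is the kernel `fiberNull` of `x_*`. -/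
def vanishingSpan (x : X) (ρ σ : Obj) : Submodule ℂ (Hom ρ σ) :=
  Submodule.span ℂ {s | ∃ f : C(X, ℂ), ∃ t : Hom ρ σ, f x = 0 ∧ s = A.act f ρ σ t}

theorem tendsto_realAct_of_mem_vanishingSpan {x : X} {s : Hom ρ σ}
    (hs : s ∈ A.vanishingSpan x ρ σ) :
    Tendsto (fun f => A.realAct ρ σ f s) (cutoffs x) (𝓝 0) := by
  induction hs using Submodule.span_induction with
  | mem s hs =>
    obtain ⟨g, t, hg, rfl⟩ := hs
    refine squeeze_zero_norm (a := fun f => ‖f.realToRCLike ℂ * g‖ * ‖t‖) (fun f => ?_) ?_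
    · rw [realAct_apply, ← A.mul_act]
      exact A.norm_act_le _ ρ σ t
    · simpa using (tendsto_cutoffs_realToRCLike_mul hg).norm.mul_const ‖t‖
  | zero => simp
  | add s s' _ _ hs hs' => simpa using hs.add hs'
  | smul c s _ hs => simpa using hs.const_smul c

end CXAction

section FiberSeminorm

variable {C : CStarCategoryStruct Hom} (A : CXAction X C) {x : X} {ρ σ τ : Obj}

theorem fiberSeminorm_eq_infDist (x : X) (t : Hom ρ σ) :
    fiberSeminorm A x t = Metric.infDist t (fiberNull A x ρ σ) := by
  rw [Metric.infDist_eq_iInf, ← sInf_image' (f := dist t)]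
  simp only [fiberSeminorm, Set.image, dist_eq_norm, SetLike.mem_coe, eq_comm]

theorem fiberSeminorm_eq_norm_mk (x : X) (t : Hom ρ σ) :
    fiberSeminorm A x t = ‖(Submodule.Quotient.mk t : Hom ρ σ ⧸ fiberNull A x ρ σ)‖ :=
  (fiberSeminorm_eq_infDist A x t).trans
    (QuotientAddGroup.norm_mk (S := (fiberNull A x ρ σ).toAddSubgroup) t).symm

theorem fiberSeminorm_lt_iff {t : Hom ρ σ} {c : ℝ} :
    fiberSeminorm A x t < c ↔ ∃ s ∈ A.vanishingSpan x ρ σ, ‖t - s‖ < c := by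
  rw [fiberSeminorm_eq_infDist, fiberNull, Submodule.topologicalClosure_coe, Metric.infDist_closure,
    Metric.infDist_lt_iff (Submodule.nonempty _)]
  simp only [dist_eq_norm, SetLike.mem_coe, CXAction.vanishingSpan]

theorem fiberSeminorm_nonneg (x : X) (t : Hom ρ σ) : 0 ≤ fiberSeminorm A x t := by
  simp only [fiberSeminorm_eq_norm_mk, norm_nonneg]

theorem fiberSeminorm_le_norm (x : X) (t : Hom ρ σ) : fiberSeminorm A x t ≤ ‖t‖ := by
  simpa only [fiberSeminorm_eq_norm_mk] using Submodule.Quotient.norm_mk_le _ t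

theorem fiberSeminorm_add_le (x : X) (t t' : Hom ρ σ) :
    fiberSeminorm A x (t + t') ≤ fiberSeminorm A x t + fiberSeminorm A x t' := by
  simpa only [fiberSeminorm_eq_norm_mk, Submodule.Quotient.mk_add] using norm_add_le _ _

theorem fiberSeminorm_smul (x : X) (c : ℂ) (t : Hom ρ σ) :
    fiberSeminorm A x (c • t) = ‖c‖ * fiberSeminorm A x t := by
  simp only [fiberSeminorm_eq_norm_mk, Submodule.Quotient.mk_smul, norm_smul]

theorem fiberSeminorm_le_norm_realAct {f : C(X, ℝ)} (hf : f x = 1) (t : Hom ρ σ) :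
    fiberSeminorm A x t ≤ ‖A.realAct ρ σ f t‖ := by
  have hmem : t - A.realAct ρ σ f t ∈ fiberNull A x ρ σ := by
    refine Submodule.le_topologicalClosure _ (Submodule.subset_span
      ⟨(1 - f).realToRCLike ℂ, t, by simp [hf], ?_⟩)
    rw [← A.realAct_apply, map_sub, map_one, LinearMap.sub_apply, Module.End.one_apply]
  calc fiberSeminorm A x t
      ≤ dist t (t - A.realAct ρ σ f t) :=
        fiberSeminorm_eq_infDist A x t ▸ Metric.infDist_le_dist_of_mem hmem
    _ = ‖A.realAct ρ σ f t‖ := by rw [dist_eq_norm, sub_sub_cancel]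

theorem tendsto_norm_realAct_cutoffs (x : X) (t : Hom ρ σ) :
    Tendsto (fun f => ‖A.realAct ρ σ f t‖) (cutoffs x) (𝓝 (fiberSeminorm A x t)) := by
  refine tendsto_order.2 ⟨fun c hc => ?_, fun c hc => ?_⟩
  · filter_upwards [eventually_cutoffs_eq_one] with f hf
    exact hc.trans_le (fiberSeminorm_le_norm_realAct A hf.self_of_nhds t)
  · obtain ⟨s, hs, hsc⟩ := (fiberSeminorm_lt_iff A).1 hc
    have hs_lim := (A.tendsto_realAct_of_mem_vanishingSpan hs).norm
    rw [norm_zero] at hs_lim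
    filter_upwards [eventually_cutoffs_norm_le_one, hs_lim.eventually_lt_const (sub_pos.2 hsc)]
      with f hf hfs
    calc ‖A.realAct ρ σ f t‖
        = ‖A.realAct ρ σ f (t - s) + A.realAct ρ σ f s‖ := by rw [← map_add, sub_add_cancel]
      _ ≤ ‖A.realAct ρ σ f (t - s)‖ + ‖A.realAct ρ σ f s‖ := norm_add_le _ _
      _ ≤ ‖t - s‖ + ‖A.realAct ρ σ f s‖ := by
        gcongr
        exact (A.norm_realAct_le f _).trans (mul_le_of_le_one_left (norm_nonneg _) hf)
      _ < c := by linarith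

theorem exists_cutoff_norm_realAct_lt {t : Hom ρ σ} {c : ℝ} (h : fiberSeminorm A x t < c) :
    ∃ f : C(X, ℝ), f =ᶠ[𝓝 x] 1 ∧ ‖A.realAct ρ σ f t‖ < c :=
  (eventually_cutoffs_eq_one.and
    ((tendsto_norm_realAct_cutoffs A x t).eventually_lt_const h)).exists

theorem fiberSeminorm_comp_le (x : X) (t : Hom σ τ) (u : Hom ρ σ) :
    fiberSeminorm A x (C.comp t u) ≤ fiberSeminorm A x t * fiberSeminorm A x u :=
  le_of_tendsto_of_tendsto'
    ((tendsto_norm_realAct_cutoffs A x _).comp tendsto_cutoffs_mul_self)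
    ((tendsto_norm_realAct_cutoffs A x t).mul (tendsto_norm_realAct_cutoffs A x u))
    fun f => by
      simpa only [Function.comp_apply, A.realAct_mul_comp] using C.norm_comp_le _ _

theorem fiberSeminorm_star (x : X) (t : Hom ρ σ) :
    fiberSeminorm A x (C.star t) = fiberSeminorm A x t :=
  tendsto_nhds_unique (tendsto_norm_realAct_cutoffs A x _) <| by
    simpa only [A.realAct_star, C.norm_star] using tendsto_norm_realAct_cutoffs A x t

theorem fiberSeminorm_star_comp_self (x : X) (t : Hom ρ σ) :
    fiberSeminorm A x (C.comp (C.star t) t) = fiberSeminorm A x t ^ 2 :=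
  tendsto_nhds_unique
    ((tendsto_norm_realAct_cutoffs A x _).comp tendsto_cutoffs_mul_self) <| by
    simpa only [Function.comp_def, A.norm_realAct_star_comp_self] using
      (tendsto_norm_realAct_cutoffs A x t).pow 2

theorem upperSemicontinuous_fiberSeminorm (t : Hom ρ σ) :
    UpperSemicontinuous fun x : X => fiberSeminorm A x t := by
  intro x c hc
  obtain ⟨f, hf, hfc⟩ := exists_cutoff_norm_realAct_lt A hc
  filter_upwards [hf] with y hy
  exact (fiberSeminorm_le_norm_realAct A hy t).trans_lt hfc

theorem norm_le_of_forall_fiberSeminorm_lt {t : Hom ρ σ} {c : ℝ} (hc : 0 < c)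
    (h : ∀ x, fiberSeminorm A x t < c) : ‖t‖ ≤ c := by
  choose f hf hfc using fun x => exists_cutoff_norm_realAct_lt A (h x)
  obtain ⟨s, p, hp, hp_le⟩ := exists_finset_partitionOfUnity hf
  have hpf (i : s) : p i * f i = p i := by
    ext y
    by_cases hy : p i y = 0
    · simp [hy]
    · simp [show f i y = 1 from (hp_le i).2 hy]
  have hpow (k : ℕ) : ‖t‖ ^ 2 ^ k ≤ Fintype.card s * c ^ 2 ^ k :=
    A.norm_pow_two_pow_le hp (fun i => (hp_le i).1) k hpf fun i => (hfc i).le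
  exact le_of_frequently_pow_le hc <|
    (tendsto_pow_atTop_atTop_of_one_lt one_lt_two).frequently (Frequently.of_forall hpow)

theorem norm_eq_iSup_fiberSeminorm (t : Hom ρ σ) : ‖t‖ = ⨆ x : X, fiberSeminorm A x t := by
  have hbdd : BddAbove (Set.range fun x : X => fiberSeminorm A x t) :=
    ⟨‖t‖, Set.forall_mem_range.2 fun x => fiberSeminorm_le_norm A x t⟩
  refine le_antisymm (le_of_forall_gt_imp_ge_of_dense fun c hc => ?_)
    (Real.iSup_le (fun x => fiberSeminorm_le_norm A x t) (norm_nonneg t))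
  have hc_pos : 0 < c := (Real.iSup_nonneg fun x => fiberSeminorm_nonneg A x t).trans_lt hc
  exact norm_le_of_forall_fiberSeminorm_lt A hc_pos fun x => (le_ciSup hbdd x).trans_lt hc

end FiberSeminorm

theorem fiber_functors_of_CX_category_general {C : CStarCategoryStruct Hom} (A : CXAction X C) :
    (∀ (ρ σ : Obj) (t : Hom ρ σ),
      UpperSemicontinuous fun x : X => fiberSeminorm A x t) ∧
    (∀ (ρ σ : Obj) (t : Hom ρ σ), ‖t‖ = ⨆ x : X, fiberSeminorm A x t) ∧
    (∀ (x : X) (ρ σ : Obj) (t t' : Hom ρ σ),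
      fiberSeminorm A x (t + t') ≤ fiberSeminorm A x t + fiberSeminorm A x t') ∧
    (∀ (x : X) (ρ σ : Obj) (c : ℂ) (t : Hom ρ σ),
      fiberSeminorm A x (c • t) = ‖c‖ * fiberSeminorm A x t) ∧
    (∀ (x : X) (ρ σ τ : Obj) (t : Hom σ τ) (u : Hom ρ σ),
      fiberSeminorm A x (C.comp t u) ≤ fiberSeminorm A x t * fiberSeminorm A x u) ∧
    (∀ (x : X) (ρ σ : Obj) (t : Hom ρ σ),
      fiberSeminorm A x (C.star t) = fiberSeminorm A x t) ∧
    (∀ (x : X) (ρ σ : Obj) (t : Hom ρ σ),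
      fiberSeminorm A x (C.comp (C.star t) t) = fiberSeminorm A x t ^ 2) :=
  ⟨fun _ _ t => upperSemicontinuous_fiberSeminorm A t,
    fun _ _ t => norm_eq_iSup_fiberSeminorm A t,
    fun x _ _ t t' => fiberSeminorm_add_le A x t t',
    fun x _ _ c t => fiberSeminorm_smul A x c t,
    fun x _ _ _ t u => fiberSeminorm_comp_le A x t u,
    fun x _ _ t => fiberSeminorm_star A x t,
    fun x _ _ t => fiberSeminorm_star_comp_self A x t⟩

/-- The fiber functors `x_* : C → C_x` of a `C(X)`-category: the norm functions
`x ↦ ‖t_x‖` are upper semicontinuous with `‖t‖ = sup_x ‖t_x‖`, and the quotient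
seminorms are compatible with the operations of `C` (so that each fiber `C_x` is a
C*-category and each `x_*` a C*-functor). -/
theorem fiber_functors_of_CX_category [∀ ρ σ : Obj, CompleteSpace (Hom ρ σ)]
    {C : CStarCategoryStruct Hom} (A : CXAction X C) :
    -- upper semicontinuity of the norm functions
    (∀ (ρ σ : Obj) (t : Hom ρ σ),
      UpperSemicontinuous fun x : X => fiberSeminorm A x t) ∧
    -- `‖t‖ = sup_x ‖t_x‖`
    (∀ (ρ σ : Obj) (t : Hom ρ σ), ‖t‖ = ⨆ x : X, fiberSeminorm A x t) ∧
    -- the `x_*` are C*-functors into C*-categories: the quotient seminorms are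
    -- subadditive, homogeneous, submultiplicative for composition, `*`-isometric,
    -- and satisfy the C*-identity
    (∀ (x : X) (ρ σ : Obj) (t t' : Hom ρ σ),
      fiberSeminorm A x (t + t') ≤ fiberSeminorm A x t + fiberSeminorm A x t') ∧
    (∀ (x : X) (ρ σ : Obj) (c : ℂ) (t : Hom ρ σ),
      fiberSeminorm A x (c • t) = ‖c‖ * fiberSeminorm A x t) ∧
    (∀ (x : X) (ρ σ τ : Obj) (t : Hom σ τ) (u : Hom ρ σ),
      fiberSeminorm A x (C.comp t u) ≤ fiberSeminorm A x t * fiberSeminorm A x u) ∧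
    (∀ (x : X) (ρ σ : Obj) (t : Hom ρ σ),
      fiberSeminorm A x (C.star t) = fiberSeminorm A x t) ∧
    (∀ (x : X) (ρ σ : Obj) (t : Hom ρ σ),
      fiberSeminorm A x (C.comp (C.star t) t) = fiberSeminorm A x t ^ 2) :=
  fiber_functors_of_CX_category_general A
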